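/- Let P be a finite p-group whose normal p-rank is one, i.e., every elementary abelian normal subgroup of P has rank at most 1 (and P is nontrivial). Then P is cyclic, dihedral of order 2^{n+1} with n ≥ 3, generalized quaternion of order 2^{n+1} with n ≥ 2, or semidihedral of order 2^{n+1} with n ≥ 3. -/

import Mathlib

/-- A group `K` is semidihedral of order `2^(n+1)` if it has generators `c` of order
`2^n` and `x` of order `2` with `x*c*x = c^(2^(n-1)-1)`, generating `K`, and
`|K| = 2^(n+1)`. -/
def IsSemidihedral (K : Type*) [Group K] (n : ℕ) : Prop :=
  ∃ c x : K, orderOf c = 2 ^ n ∧ orderOf x = 2 ∧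
    x * c * x = c ^ (2 ^ (n - 1) - 1) ∧
    Subgroup.closure {c, x} = (⊤ : Subgroup K) ∧ Nat.card K = 2 ^ (n + 1)

lemma nr_geom (p : ℕ) (hp : p.Prime) (r : ℤ) (h1 : (p : ℤ) ∣ r - 1)
    (h2 : p = 2 → (4 : ℤ) ∣ r - 1) :
    ∃ u : ℤ, (∑ i ∈ Finset.range p, r ^ i) = p * u ∧ ¬ (p : ℤ) ∣ u := by
  have hpi : Prime (p : ℤ) := Nat.prime_iff_prime_int.mp hp
  rcases hp.eq_two_or_odd' with rfl | hodd
  · obtain ⟨s, hs⟩ := h2 rfl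
    refine ⟨1 + 2 * s, ?_, ?_⟩
    · simp [Finset.sum_range_succ]; linarith
    · push_cast; omega
  · have hr : ¬ (p : ℤ) ∣ r := fun h => by
      have := (dvd_sub h h1)
      rw [sub_sub_cancel] at this
      exact hpi.not_isUnit (isUnit_of_dvd_one this)
    have h := emultiplicity_geom_sum₂_eq_one (R := ℤ) (x := r) (y := 1) hpi hodd h1 hr
    simp only [one_pow, mul_one] at h
    rw [← Nat.cast_one, emultiplicity_eq_coe, pow_one] at h
    obtain ⟨⟨u, hu⟩, h3⟩ := h
    refine ⟨u, hu, fun ⟨v, hv⟩ => h3 ⟨v, ?_⟩⟩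
    rw [hu, hv]; ring

lemma nr_zpow_eq_one {G : Type*} [Group G] {c : G} {N : ℕ} (hc : orderOf c = N) (a : ℤ) :
    c ^ a = 1 ↔ (N : ℤ) ∣ a := by
  rw [← hc, orderOf_dvd_iff_zpow_eq_one]

lemma nr_zpow_eq {G : Type*} [Group G] {c : G} {N : ℕ} (hc : orderOf c = N) (a b : ℤ) :
    c ^ a = c ^ b ↔ (N : ℤ) ∣ a - b := by
  rw [← nr_zpow_eq_one hc, zpow_sub, mul_inv_eq_one]

lemma nr_conj {G : Type*} [Group G] {c y : G} {r : ℤ} (h : y * c * y⁻¹ = c ^ r) (a : ℤ) :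
    y * c ^ a * y⁻¹ = c ^ (r * a) := by
  rw [← conj_zpow, h, zpow_mul]

lemma nr_conj_pow {G : Type*} [Group G] {c y : G} {r : ℤ} (h : y * c * y⁻¹ = c ^ r) (k : ℕ) :
    y ^ k * c * (y ^ k)⁻¹ = c ^ (r ^ k) := by
  induction k with
  | zero => simp
  | succ k ih =>
    have : y ^ (k+1) * c * (y ^ (k+1))⁻¹ = y * (y ^ k * c * (y ^ k)⁻¹) * y⁻¹ := by
      rw [pow_succ']; group
    rw [this, ih, nr_conj h, pow_succ']

lemma nr_mul_pow {G : Type*} [Group G] {c y : G} {r : ℤ} (h : y * c * y⁻¹ = c ^ r) (m : ℤ) (k : ℕ) :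
    (c ^ m * y) ^ k = c ^ (m * ∑ i ∈ Finset.range k, r ^ i) * y ^ k := by
  induction k with
  | zero => simp
  | succ k ih =>
    have h2 := nr_conj (nr_conj_pow h k) m
    rw [pow_succ, ih, Finset.sum_range_succ, mul_add, zpow_add, mul_comm m (r ^ k), ← h2, pow_succ]
    group

lemma nr_cyclic {N : Type*} [Group N] [Finite N] [IsCyclic N] {p : ℕ} (hp : p.Prime) {a b : N}
    (ha : a ^ p = 1) (ha1 : a ≠ 1) (hb : b ^ p = 1) : b ∈ Subgroup.zpowers a := by
  classical
  have := Fintype.ofFinite N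
  have : Fact p.Prime := ⟨hp⟩
  have ho : orderOf a = p := orderOf_eq_prime ha ha1
  have h1 := IsCyclic.card_pow_eq_one_le (α := N) hp.pos
  have hsub : (Finset.univ.filter (fun x => x ∈ Subgroup.zpowers a)) ⊆
      (Finset.univ.filter (fun x : N => x ^ p = 1)) := by
    intro x hx
    simp only [Finset.mem_filter, Finset.mem_univ, true_and] at hx ⊢
    obtain ⟨k, rfl⟩ := hx
    change (a ^ k) ^ p = 1
    rw [← zpow_natCast, ← zpow_mul, mul_comm, zpow_mul, zpow_natCast, ha, one_zpow]
  have h2 : (Finset.univ.filter (fun x => x ∈ Subgroup.zpowers a)).card = p := by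
    rw [← ho, ← Nat.card_zpowers, Nat.card_eq_fintype_card, Fintype.card_subtype]
  have h3 := Finset.eq_of_subset_of_card_le hsub (by rw [h2]; exact h1)
  have : b ∈ (Finset.univ.filter (fun x : N => x ^ p = 1)) := by simp [hb]
  rw [← h3] at this
  simpa using this

/-- two elements of order dividing `p` in a normal elementary abelian subgroup -/
lemma nr_cyclic_sub {P : Type*} [Group P] [Finite P] {p : ℕ} (hp : p.Prime) (N : Subgroup P)
    (hN : IsCyclic N) {a b : P} (haN : a ∈ N) (hbN : b ∈ N)
    (ha : a ^ p = 1) (ha1 : a ≠ 1) (hb : b ^ p = 1) : b ∈ Subgroup.zpowers a := by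
  have := nr_cyclic (N := N) hp (a := ⟨a, haN⟩) (b := ⟨b, hbN⟩) (by ext; simpa using ha)
    (by simpa [Subtype.ext_iff] using ha1) (by ext; simpa using hb)
  obtain ⟨k, hk⟩ := this
  exact ⟨k, by simpa [Subtype.ext_iff] using hk⟩

lemma nr_closure_normal {P : Type*} [Group P] (s : Set P)
    (h : ∀ a ∈ s, ∀ w : P, w * a * w⁻¹ ∈ Subgroup.closure s) : (Subgroup.closure s).Normal := by
  refine ⟨fun n hn g => ?_⟩
  induction hn using Subgroup.closure_induction with
  | mem x hx => exact h x hx g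
  | one => simp
  | mul x y _ _ hx hy =>
    have : g * (x * y) * g⁻¹ = (g * x * g⁻¹) * (g * y * g⁻¹) := by group
    rw [this]; exact mul_mem hx hy
  | inv x _ hx =>
    have : g * x⁻¹ * g⁻¹ = (g * x * g⁻¹)⁻¹ := by group
    rw [this]; exact inv_mem hx

def NRank (p : ℕ) (P : Type*) [Group P] : Prop :=
  ∀ N : Subgroup P, N.Normal → (∀ g ∈ N, g ^ p = 1) →
      (∀ a ∈ N, ∀ b ∈ N, a * b = b * a) → IsCyclic N

lemma nr_L1 {P : Type*} [Group P] [Finite P] {p : ℕ} (hp : p.Prime) (hr : NRank p P) {z x : P}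
    (hz : z ^ p = 1) (hz1 : z ≠ 1) (hzn : ∀ w : P, w * z * w⁻¹ ∈ Subgroup.zpowers z)
    (hx : x ^ p = 1) (hxz : x ∉ Subgroup.zpowers z) (hcomm : x * z = z * x)
    (hxn : ∀ w : P, w * x * w⁻¹ * x⁻¹ ∈ Subgroup.zpowers z) : False := by
  have hzN : z ∈ Subgroup.closure ({z, x} : Set P) := Subgroup.subset_closure (by simp)
  have hxN : x ∈ Subgroup.closure ({z, x} : Set P) := Subgroup.subset_closure (by simp)
  have hle : Subgroup.zpowers z ≤ Subgroup.closure ({z, x} : Set P) := by simpa using hzN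
  have hc : ∀ a ∈ Subgroup.closure ({z, x} : Set P), ∀ b ∈ Subgroup.closure ({z, x} : Set P),
      a * b = b * a := by
    have := Subgroup.isMulCommutative_closure (k := ({z, x} : Set P)) (by
      rintro a (rfl | rfl) b (rfl | rfl) <;> first | rfl | exact hcomm | exact hcomm.symm)
    intro a ha b hb
    exact setLike_mul_comm ha hb
  refine hxz (nr_cyclic_sub hp (Subgroup.closure {z, x}) (hr _ ?_ ?_ hc) hzN hxN hz hz1 hx)
  · apply nr_closure_normal
    rintro a (rfl | rfl) w
    · exact hle (hzn w)
    · have : w * a * w⁻¹ = (w * a * w⁻¹ * a⁻¹) * a := by group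
      rw [this]
      exact mul_mem (hle (hxn w)) hxN
  · intro g hg
    induction hg using Subgroup.closure_induction with
    | mem y hy => rcases hy with rfl | rfl <;> assumption
    | one => simp
    | mul a b ha hb h1 h2 =>
      rw [(show Commute a b from hc a ha b hb).mul_pow, h1, h2, one_mul]
    | inv a _ h1 => rw [inv_pow, h1, inv_one]

lemma nr_coprime {p : ℕ} (hp : p.Prime) {u : ℤ} (hu : ¬ (p : ℤ) ∣ u) (k : ℕ) :
    IsCoprime ((p : ℤ) ^ k) u :=
  IsCoprime.pow_left ((Nat.prime_iff_prime_int.mp hp).coprime_iff_not_dvd.mpr hu)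

/-- an element of order `p` modulo `⟨c⟩` acting trivially modulo `p` (resp. `4`) -/
lemma nr_main {P : Type*} [Group P] [Finite P] {p : ℕ} (hp : p.Prime) (hr : NRank p P) {c : P}
    {n : ℕ} (hc : orderOf c = p ^ n) (hn : ∀ w : P, ∃ s : ℤ, w * c * w⁻¹ = c ^ s)
    (hcen : ∀ w : P, w * c * w⁻¹ = c → w ∈ Subgroup.zpowers c)
    {y : P} {r : ℤ} (hy : y * c * y⁻¹ = c ^ r) (h1 : (p : ℤ) ∣ r - 1)
    (h2 : p = 2 → (4 : ℤ) ∣ r - 1) (hyp : y ^ p ∈ Subgroup.zpowers c) :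
    y ∈ Subgroup.zpowers c := by
  by_contra hyA
  have hpi : Prime (p : ℤ) := Nat.prime_iff_prime_int.mp hp
  have hp0 : (p : ℤ) ≠ 0 := hpi.ne_zero
  have hr1 : ¬ ((p : ℤ) ^ n ∣ r - 1) := fun h => hyA (hcen y (by
    rw [hy]; conv_rhs => rw [← zpow_one c]
    rw [nr_zpow_eq hc]; exact_mod_cast h))
  obtain ⟨n, rfl⟩ : ∃ m, n = m + 1 := by
    cases n with
    | zero => simp at hr1
    | succ m => exact ⟨m, rfl⟩
  obtain ⟨u, hu, hpu⟩ := nr_geom p hp r h1 h2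
  obtain ⟨k, hk⟩ := hyp
  change c ^ k = y ^ p at hk
  -- `r ≡ 1 mod p ^ n`
  have hrp : ((p : ℤ) ^ (n+1)) ∣ r ^ p - 1 := by
    have h3 := nr_conj_pow hy p
    rw [← hk] at h3
    have h4 : c ^ k * c * (c ^ k)⁻¹ = c ^ (1 : ℤ) := by group
    rw [h4, eq_comm, nr_zpow_eq hc] at h3
    exact_mod_cast h3
  have hrn : ((p : ℤ) ^ n) ∣ r - 1 := by
    rw [← geom_sum_mul, hu, pow_succ', mul_assoc] at hrp
    have := Int.dvd_of_mul_dvd_mul_left hp0 hrp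
    exact (nr_coprime hp hpu n).dvd_of_dvd_mul_left this
  have hpk : (p : ℤ) ∣ k := by
    have h3 := nr_conj hy k
    have h4 : y * c ^ k * y⁻¹ = c ^ k := by rw [hk]; group
    rw [h4, eq_comm, nr_zpow_eq hc] at h3
    obtain ⟨s, hs⟩ := hrn
    have hps : ¬ (p : ℤ) ∣ s := by
      rintro ⟨t, rfl⟩
      exact hr1 ⟨t, by rw [hs]; ring⟩
    have h5 : r * k - k = (p : ℤ) ^ n * (s * k) := by linear_combination k * hs
    rw [h5] at h3
    push_cast at h3
    rw [pow_succ] at h3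
    have h6 := Int.dvd_of_mul_dvd_mul_left (pow_ne_zero n hp0) h3
    exact (hpi.dvd_or_dvd h6).resolve_left hps
  obtain ⟨l, rfl⟩ := hpk
  obtain ⟨s, m, hsm⟩ := nr_coprime hp hpu n
  set x := c ^ (-l * m) * y with hxdef
  have hxc : x * c * x⁻¹ = c ^ r := by
    have : x * c * x⁻¹ = c ^ (-l * m) * (y * c * y⁻¹) * (c ^ (-l * m))⁻¹ := by
      rw [hxdef]; group
    rw [this, hy]; group
  have hxp : x ^ p = 1 := by
    rw [hxdef, nr_mul_pow hy, hu, ← hk, ← zpow_add, nr_zpow_eq_one hc]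
    refine ⟨l * s, ?_⟩
    push_cast
    linear_combination (-(p : ℤ) * l) * hsm
  have hxA : x ∉ Subgroup.zpowers c := fun h => hyA (by
    have : y = (c ^ (-l * m))⁻¹ * x := by rw [hxdef]; group
    rw [this]
    exact mul_mem (inv_mem (Subgroup.zpow_mem_zpowers _ _)) h)
  have hz_mem : ∀ a : ℤ, (p : ℤ) ^ n ∣ a → c ^ a ∈ Subgroup.zpowers (c ^ ((p : ℤ) ^ n)) := by
    rintro a ⟨b, rfl⟩
    exact ⟨b, by simp [zpow_mul]⟩
  refine nr_L1 hp hr (z := c ^ ((p : ℤ) ^ n)) (x := x) ?_ ?_ ?_ hxp ?_ ?_ ?_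
  · rw [← zpow_natCast, ← zpow_mul, nr_zpow_eq_one hc]
    push_cast; rw [pow_succ]
  · rw [Ne, nr_zpow_eq_one hc]
    push_cast
    intro h
    rw [pow_succ] at h
    have := Int.dvd_of_mul_dvd_mul_left (pow_ne_zero n hp0) (h.trans (by rw [mul_one] : _ ∣ (p:ℤ)^n * 1))
    exact hpi.not_isUnit (isUnit_of_dvd_one this)
  · intro w
    obtain ⟨s, hs⟩ := hn w
    rw [nr_conj hs]
    exact hz_mem _ (dvd_mul_left _ _)
  · intro h
    have hle : Subgroup.zpowers (c ^ ((p : ℤ) ^ n)) ≤ Subgroup.zpowers c := by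
      simp only [Subgroup.zpowers_le]
      exact Subgroup.zpow_mem_zpowers _ _
    exact hxA (hle h)
  · have h3 := nr_conj hxc ((p : ℤ) ^ n)
    rw [mul_inv_eq_iff_eq_mul] at h3
    rw [h3]
    congr 1
    rw [nr_zpow_eq hc]
    push_cast
    obtain ⟨t, ht⟩ := h1
    exact ⟨t, by linear_combination (p : ℤ) ^ n * ht⟩
  · intro w
    obtain ⟨s, hs⟩ := hn w
    have hcw : (w * x * w⁻¹ * x⁻¹) * c * (w * x * w⁻¹ * x⁻¹)⁻¹ = c := by
      have e1 : (w * x) * c * (w * x)⁻¹ = c ^ (s * r) := by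
        rw [← nr_conj hs, ← hxc]; group
      have e2 : (x * w) * c * (x * w)⁻¹ = c ^ (s * r) := by
        rw [mul_comm s r, ← nr_conj hxc, ← hs]; group
      obtain ⟨a, ha⟩ := hn (x * w)⁻¹
      calc (w * x * w⁻¹ * x⁻¹) * c * (w * x * w⁻¹ * x⁻¹)⁻¹
          = (w * x) * ((x * w)⁻¹ * c * (x * w)⁻¹⁻¹) * (w * x)⁻¹ := by group
        _ = (x * w) * ((x * w)⁻¹ * c * (x * w)⁻¹⁻¹) * (x * w)⁻¹ := by
            rw [ha, nr_conj e1, nr_conj e2]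
        _ = c := by group
    obtain ⟨a, ha⟩ := hcen _ hcw
    change c ^ a = _ at ha
    rw [← ha]
    apply hz_mem
    have h3 : (c ^ a * x) ^ p = 1 := by
      have : c ^ a * x = w * x * w⁻¹ := by rw [ha]; group
      rw [this, conj_pow, hxp]; group
    rw [nr_mul_pow hxc, hxp, mul_one, hu, nr_zpow_eq_one hc] at h3
    push_cast at h3
    rw [pow_succ', mul_left_comm] at h3
    have := Int.dvd_of_mul_dvd_mul_left hp0 h3
    exact (nr_coprime hp hpu n).dvd_of_dvd_mul_right this

lemma nr_exists_root {P : Type*} [Group P] {p : ℕ} (hP : IsPGroup p P) (A : Subgroup P) {y : P}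
    (hy : y ∉ A) : ∃ k : ℕ, y ^ p ^ k ∉ A ∧ (y ^ p ^ k) ^ p ∈ A := by
  classical
  have hex : ∃ k : ℕ, y ^ p ^ k ∈ A := by
    obtain ⟨k, hk⟩ := hP y
    exact ⟨k, by rw [hk]; exact one_mem _⟩
  have h0 : Nat.find hex ≠ 0 := fun h => hy (by
    have := Nat.find_spec hex
    rw [h] at this; simpa using this)
  obtain ⟨k, hk⟩ := Nat.exists_eq_succ_of_ne_zero h0
  refine ⟨k, Nat.find_min hex (by omega), ?_⟩
  have := Nat.find_spec hex
  rw [hk, Nat.succ_eq_add_one, pow_succ, pow_mul] at this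
  exact this

lemma nr_K {P : Type*} [Group P] [Finite P] {p : ℕ} (hp : p.Prime) (hP : IsPGroup p P)
    (hr : NRank p P) {c : P}
    {n : ℕ} (hc : orderOf c = p ^ n) (hn : ∀ w : P, ∃ s : ℤ, w * c * w⁻¹ = c ^ s)
    (hcen : ∀ w : P, w * c * w⁻¹ = c → w ∈ Subgroup.zpowers c)
    {y : P} {r : ℤ} (hy : y * c * y⁻¹ = c ^ r) (h1 : (p : ℤ) ∣ r - 1)
    (h2 : p = 2 → (4 : ℤ) ∣ r - 1) : y ∈ Subgroup.zpowers c := by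
  by_contra hyA
  obtain ⟨k, hk1, hk2⟩ := nr_exists_root hP _ hyA
  have hd : r - 1 ∣ r ^ (p ^ k) - 1 := sub_one_dvd_pow_sub_one _ _
  exact hk1 (nr_main hp hr hc hn hcen (nr_conj_pow hy (p ^ k)) (h1.trans hd)
    (fun h => (h2 h).trans hd) hk2)

lemma nr_abelian {P : Type*} [Group P] [Finite P] {p : ℕ} (hp : p.Prime) (hP : IsPGroup p P)
    (hr : NRank p P) (A : Subgroup P) (hA : A.Normal) (hab : ∀ a ∈ A, ∀ b ∈ A, a * b = b * a) :
    ∃ c, A = Subgroup.zpowers c := by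
  let N : Subgroup P :=
    { carrier := {g | g ∈ A ∧ g ^ p = 1}
      one_mem' := ⟨one_mem _, one_pow _⟩
      mul_mem' := by
        rintro a b ⟨ha, ha1⟩ ⟨hb, hb1⟩
        exact ⟨mul_mem ha hb, by rw [(show Commute a b from hab a ha b hb).mul_pow, ha1, hb1, one_mul]⟩
      inv_mem' := by
        rintro a ⟨ha, ha1⟩
        exact ⟨inv_mem ha, by rw [inv_pow, ha1, inv_one]⟩ }
  have hN : IsCyclic N := by
    apply hr
    · refine ⟨fun g hg w => ⟨hA.conj_mem g hg.1 w, ?_⟩⟩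
      rw [conj_pow, hg.2]; group
    · exact fun g hg => hg.2
    · exact fun a ha b hb => hab a ha.1 b hb.1
  obtain ⟨c, hcA, hmax⟩ := Set.exists_max_image (A : Set P) orderOf (Set.toFinite _) ⟨1, one_mem _⟩
  refine ⟨c, le_antisymm ?_ (by simpa using hcA)⟩
  intro b0 hb0
  by_contra hb0c
  obtain ⟨k, hk1, hk2⟩ := nr_exists_root hP _ hb0c
  set b := b0 ^ p ^ k with hb
  have hbA : b ∈ A := pow_mem hb0 _
  have : Fact p.Prime := ⟨hp⟩
  obtain ⟨n, hn⟩ := (IsPGroup.iff_orderOf.mp hP) c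
  obtain ⟨m, hm⟩ := (IsPGroup.iff_orderOf.mp hP) b
  have hmn : m ≤ n := by
    have := hmax b hbA
    rw [hm, hn] at this
    exact (Nat.pow_le_pow_iff_right hp.one_lt).mp this
  have hm0 : m ≠ 0 := by
    rintro rfl
    rw [pow_zero, orderOf_eq_one_iff] at hm
    exact hk1 (hm ▸ one_mem _)
  obtain ⟨n, rfl⟩ : ∃ n', n = n' + 1 := ⟨n - 1, by omega⟩
  have hpi : Prime (p : ℤ) := Nat.prime_iff_prime_int.mp hp
  have hp0 : (p : ℤ) ≠ 0 := hpi.ne_zero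
  obtain ⟨j, hj⟩ := hk2
  change c ^ j = b ^ p at hj
  have hbn : b ^ p ^ (n + 1) = 1 := by
    rw [← orderOf_dvd_iff_pow_eq_one, hm]; exact pow_dvd_pow _ hmn
  have hpj : (p : ℤ) ∣ j := by
    rw [pow_succ', pow_mul, ← hj, ← zpow_natCast, ← zpow_mul, nr_zpow_eq_one hn] at hbn
    push_cast at hbn
    rw [pow_succ, mul_comm j] at hbn
    exact Int.dvd_of_mul_dvd_mul_left (pow_ne_zero n hp0) hbn
  obtain ⟨l, rfl⟩ := hpj
  have hcl : c ^ (-l) ∈ A := zpow_mem hcA _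
  have hd : (c ^ (-l) * b) ^ p = 1 := by
    rw [(show Commute (c ^ (-l)) b from hab _ hcl b hbA).mul_pow, ← hj, ← zpow_natCast, ← zpow_mul,
      ← zpow_add]
    have : -l * (p : ℤ) + p * l = 0 := by ring
    rw [this, zpow_zero]
  have hz : (c ^ p ^ n) ^ p = 1 := by
    rw [← pow_mul, ← pow_succ, ← hn, pow_orderOf_eq_one]
  have hz1 : c ^ p ^ n ≠ 1 := by
    rw [Ne, ← orderOf_dvd_iff_pow_eq_one, hn, Nat.pow_dvd_pow_iff_le_right hp.one_lt]
    omega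
  have hmem := nr_cyclic_sub hp N hN (a := c ^ p ^ n) (b := c ^ (-l) * b) ⟨pow_mem hcA _, hz⟩
    ⟨mul_mem hcl hbA, hd⟩ hz hz1 hd
  have hle : Subgroup.zpowers (c ^ p ^ n) ≤ Subgroup.zpowers c := by
    rw [Subgroup.zpowers_le]
    exact Subgroup.npow_mem_zpowers _ _
  apply hk1
  have : b = (c ^ (-l))⁻¹ * (c ^ (-l) * b) := by group
  rw [this]
  exact mul_mem (inv_mem (Subgroup.zpow_mem_zpowers _ _)) (hle hmem)

open scoped commutatorElement in
lemma nr_exists_c {P : Type*} [Group P] [Finite P] {p : ℕ} (hp : p.Prime) (hP : IsPGroup p P)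
    (hr : NRank p P) : ∃ c : P, (∀ w : P, ∃ s : ℤ, w * c * w⁻¹ = c ^ s) ∧
      (∀ w : P, w * c * w⁻¹ = c → w ∈ Subgroup.zpowers c) := by
  have : Fact p.Prime := ⟨hp⟩
  have hnil : Group.IsNilpotent P := hP.isNilpotent
  let S : Set (Subgroup P) := {A | A.Normal ∧ ∀ a ∈ A, ∀ b ∈ A, a * b = b * a}
  obtain ⟨A, hAS, hAmax⟩ := (Set.toFinite S).exists_maximal (⟨⊥, inferInstance, by simp⟩)
  obtain ⟨hAn, hAab⟩ := hAS
  obtain ⟨c, rfl⟩ := nr_abelian hp hP hr A hAn hAab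
  have hcc : c ∈ Subgroup.zpowers c := Subgroup.mem_zpowers c
  refine ⟨c, fun w => ?_, ?_⟩
  · obtain ⟨s, hs⟩ := hAn.conj_mem c hcc w
    exact ⟨s, hs.symm⟩
  have hcomm : ∀ w : P, w * c * w⁻¹ = c → ∀ a ∈ Subgroup.zpowers c, w * a = a * w := by
    rintro w hw a ⟨i, rfl⟩
    rw [mul_inv_eq_iff_eq_mul] at hw
    exact (show Commute w c from hw).zpow_right i
  have hgen : ∀ g : P, ∃ s : ℤ, g * c * g⁻¹ = c ^ s := fun g => by
    obtain ⟨s, hs⟩ := hAn.conj_mem c hcc g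
    exact ⟨s, hs.symm⟩
  by_contra hcon
  push Not at hcon
  obtain ⟨w0, hw0, hw0A⟩ := hcon
  let C := Subgroup.centralizer ((Subgroup.zpowers c : Subgroup P) : Set P)
  have hCn : C.Normal := inferInstance
  have hmemC : ∀ w : P, w ∈ C ↔ w * c * w⁻¹ = c := by
    intro w
    constructor
    · intro h
      have := Subgroup.mem_centralizer_iff.mp h c hcc
      rw [← this]; group
    · intro h
      exact Subgroup.mem_centralizer_iff.mpr fun a ha => (hcomm w h a ha).symm
  classical
  have hex : ∃ k, C ⊓ (⊤ : Subgroup P).lowerCentralSeries k ≤ Subgroup.zpowers c := by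
    obtain ⟨k, hk⟩ := Subgroup.nilpotent_iff_lowerCentralSeries.mp hnil
    exact ⟨k, by rw [hk]; simp⟩
  have h0 : Nat.find hex ≠ 0 := fun h => hw0A (by
    have := Nat.find_spec hex
    rw [h] at this
    exact this ⟨(hmemC _).mpr hw0, by simp⟩)
  obtain ⟨k, hk⟩ := Nat.exists_eq_succ_of_ne_zero h0
  have hlt := Nat.find_min hex (show k < Nat.find hex by omega)
  have hspec := Nat.find_spec hex
  rw [hk] at hspec
  obtain ⟨y, ⟨hyC, hyk⟩, hyA⟩ := SetLike.not_le_iff_exists.mp hlt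
  have hyw : ∀ w : P, w * y * w⁻¹ * y⁻¹ ∈ Subgroup.zpowers c := by
    intro w
    have hyC' : y ∈ C := hyC
    have hm : w * y * w⁻¹ * y⁻¹ ∈ C := mul_mem (hCn.conj_mem y hyC w) (inv_mem hyC')
    refine hspec ⟨hm, ?_⟩
    have : w * y * w⁻¹ * y⁻¹ = ⁅y, w⁆⁻¹ := by rw [commutatorElement_def]; group
    rw [this]
    exact (inv_mem (Subgroup.commutator_mem_commutator hyk (Subgroup.mem_top w)) :
      ⁅y, w⁆⁻¹ ∈ ⁅(⊤ : Subgroup P).lowerCentralSeries k, ⊤⁆)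
  have hyc : y * c = c * y := by
    have := (hmemC y).mp hyC
    rwa [mul_inv_eq_iff_eq_mul] at this
  have hyB : y ∈ Subgroup.closure ({c, y} : Set P) := Subgroup.subset_closure (by simp)
  have hcB : c ∈ Subgroup.closure ({c, y} : Set P) := Subgroup.subset_closure (by simp)
  have hle : Subgroup.zpowers c ≤ Subgroup.closure ({c, y} : Set P) := by simpa using hcB
  have hB : Subgroup.closure ({c, y} : Set P) ∈ S := by
    refine ⟨nr_closure_normal _ ?_, ?_⟩
    · rintro a (rfl | rfl) w
      · exact hle (hAn.conj_mem _ hcc w)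
      · have : w * a * w⁻¹ = (w * a * w⁻¹ * a⁻¹) * a := by group
        rw [this]
        exact mul_mem (hle (hyw w)) hyB
    · have := Subgroup.isMulCommutative_closure (k := ({c, y} : Set P)) (by
        rintro a (rfl | rfl) b (rfl | rfl) <;> first | rfl | exact hyc | exact hyc.symm)
      intro a ha b hb
      exact setLike_mul_comm ha hb
  exact hyA (hAmax hB hle hyB)

lemma nr_zmod {P : Type*} [Group P] {c : P} {N : ℕ} (hc : orderOf c = N) :
    ∃ φ : ZMod N → P, ∀ k : ℤ, φ (k : ZMod N) = c ^ k := by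
  refine ⟨fun i => c ^ (i.cast : ℤ), fun k => ?_⟩
  rw [nr_zpow_eq hc, ← ZMod.intCast_zmod_eq_zero_iff_dvd]
  simp

lemma nr_rel {P : Type*} [Group P] {c x : P} (hx : x * c * x⁻¹ = c⁻¹) (a : ℤ) :
    c ^ a * x = x * c ^ (-a) := by
  have h := nr_conj (c := c) (y := x) (r := -1) (by simpa using hx) (-a)
  rw [mul_inv_eq_iff_eq_mul] at h
  rw [h]; simp

lemma nr_dihedral {P : Type*} [Group P] {c x : P} {N : ℕ} (hc : orderOf c = N)
    (hx : x * c * x⁻¹ = c⁻¹) (hx2 : x * x = 1) (hxA : x ∉ Subgroup.zpowers c)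
    (hcov : ∀ w : P, w ∈ Subgroup.zpowers c ∨ x * w ∈ Subgroup.zpowers c) :
    Nonempty (P ≃* DihedralGroup N) := by
  obtain ⟨φ, hφ⟩ := nr_zmod hc
  have hA : ∀ i j : ℤ, c ^ i = c ^ j → (i : ZMod N) = j := fun i j h => by
    rw [nr_zpow_eq hc, ← ZMod.intCast_zmod_eq_zero_iff_dvd] at h
    push_cast at h; exact sub_eq_zero.mp h
  have hB : ∀ i j : ℤ, c ^ i ≠ x * c ^ j := fun i j h => hxA (by
    rw [← mul_inv_eq_iff_eq_mul] at h
    rw [← h]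
    exact mul_mem (Subgroup.zpow_mem_zpowers _ _) (inv_mem (Subgroup.zpow_mem_zpowers _ _)))
  let f : DihedralGroup N → P := fun g => match g with
    | .r i => φ i
    | .sr i => x * φ i
  have hf1 : ∀ k : ℤ, f (.r k) = c ^ k := hφ
  have hf2 : ∀ k : ℤ, f (.sr k) = x * c ^ k := fun k => congrArg (x * ·) (hφ k)
  have hrel := nr_rel hx
  let F : DihedralGroup N →* P := MonoidHom.mk' f (by
    rintro (i | i) (j | j) <;> obtain ⟨i, rfl⟩ := ZMod.intCast_surjective i <;>
      obtain ⟨j, rfl⟩ := ZMod.intCast_surjective j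
    · rw [DihedralGroup.r_mul_r, ← Int.cast_add, hf1, hf1, hf1, zpow_add]
    · rw [DihedralGroup.r_mul_sr, ← Int.cast_sub, hf1, hf2, hf2, ← mul_assoc, hrel, mul_assoc,
        ← zpow_add]; congr 2; ring
    · rw [DihedralGroup.sr_mul_r, ← Int.cast_add, hf1, hf2, hf2, zpow_add, mul_assoc]
    · rw [DihedralGroup.sr_mul_sr, ← Int.cast_sub, hf1, hf2, hf2, mul_assoc, ← mul_assoc (c ^ i),
        hrel, mul_assoc, ← mul_assoc x x, hx2, ← zpow_add, one_mul]; congr 1; ring)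
  have hFf : ∀ g, F g = f g := fun _ => rfl
  refine ⟨(MulEquiv.ofBijective F ⟨?_, ?_⟩).symm⟩
  · rintro (i | i) (j | j) h <;> obtain ⟨i, rfl⟩ := ZMod.intCast_surjective i <;>
      obtain ⟨j, rfl⟩ := ZMod.intCast_surjective j
    · rw [hFf, hFf, hf1, hf1] at h; rw [hA _ _ h]
    · rw [hFf, hFf, hf1, hf2] at h; exact (hB _ _ h).elim
    · rw [hFf, hFf, hf1, hf2] at h; exact (hB _ _ h.symm).elim
    · rw [hFf, hFf, hf2, hf2] at h; rw [hA _ _ (mul_left_cancel h)]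
  · intro w
    rcases hcov w with ⟨k, hk⟩ | ⟨k, hk⟩
    · exact ⟨.r k, (hf1 k).trans hk⟩
    · refine ⟨.sr k, (hf2 k).trans ?_⟩
      change c ^ k = x * w at hk
      rw [hk, ← mul_assoc, hx2, one_mul]

lemma nr_quaternion {P : Type*} [Group P] {c x : P} {N : ℕ} (hc : orderOf c = 2 * N)
    (hx : x * c * x⁻¹ = c⁻¹) (hx2 : x * x = c ^ (N : ℤ)) (hxA : x ∉ Subgroup.zpowers c)
    (hcov : ∀ w : P, w ∈ Subgroup.zpowers c ∨ x * w ∈ Subgroup.zpowers c) :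
    Nonempty (P ≃* QuaternionGroup N) := by
  obtain ⟨φ, hφ⟩ := nr_zmod hc
  have hA : ∀ i j : ℤ, c ^ i = c ^ j → (i : ZMod (2 * N)) = j := fun i j h => by
    rw [nr_zpow_eq hc, ← ZMod.intCast_zmod_eq_zero_iff_dvd] at h
    push_cast at h; exact sub_eq_zero.mp h
  have hB : ∀ i j : ℤ, c ^ i ≠ x * c ^ j := fun i j h => hxA (by
    rw [← mul_inv_eq_iff_eq_mul] at h
    rw [← h]
    exact mul_mem (Subgroup.zpow_mem_zpowers _ _) (inv_mem (Subgroup.zpow_mem_zpowers _ _)))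
  let f : QuaternionGroup N → P := fun g => match g with
    | .a i => φ i
    | .xa i => x * φ i
  have hf1 : ∀ k : ℤ, f (.a k) = c ^ k := hφ
  have hf2 : ∀ k : ℤ, f (.xa k) = x * c ^ k := fun k => congrArg (x * ·) (hφ k)
  have hrel := nr_rel hx
  let F : QuaternionGroup N →* P := MonoidHom.mk' f (by
    rintro (i | i) (j | j) <;> obtain ⟨i, rfl⟩ := ZMod.intCast_surjective i <;>
      obtain ⟨j, rfl⟩ := ZMod.intCast_surjective j
    · rw [QuaternionGroup.a_mul_a, ← Int.cast_add, hf1, hf1, hf1, zpow_add]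
    · rw [QuaternionGroup.a_mul_xa, ← Int.cast_sub, hf1, hf2, hf2, ← mul_assoc, hrel, mul_assoc,
        ← zpow_add]; congr 2; ring
    · rw [QuaternionGroup.xa_mul_a, ← Int.cast_add, hf1, hf2, hf2, zpow_add, mul_assoc]
    · rw [QuaternionGroup.xa_mul_xa, ← Int.cast_natCast N, ← Int.cast_add, ← Int.cast_sub, hf1, hf2,
        hf2, mul_assoc, ← mul_assoc (c ^ i),
        hrel, mul_assoc, ← mul_assoc x x, hx2, ← zpow_add, ← zpow_add]; congr 1; ring)
  have hFf : ∀ g, F g = f g := fun _ => rfl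
  refine ⟨(MulEquiv.ofBijective F ⟨?_, ?_⟩).symm⟩
  · rintro (i | i) (j | j) h <;> obtain ⟨i, rfl⟩ := ZMod.intCast_surjective i <;>
      obtain ⟨j, rfl⟩ := ZMod.intCast_surjective j
    · rw [hFf, hFf, hf1, hf1] at h; rw [hA _ _ h]
    · rw [hFf, hFf, hf1, hf2] at h; exact (hB _ _ h).elim
    · rw [hFf, hFf, hf1, hf2] at h; exact (hB _ _ h.symm).elim
    · rw [hFf, hFf, hf2, hf2] at h; rw [hA _ _ (mul_left_cancel h)]
  · intro w
    rcases hcov w with ⟨k, hk⟩ | ⟨k, hk⟩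
    · exact ⟨.a k, (hf1 k).trans hk⟩
    · refine ⟨.xa ((k - N : ℤ) : ZMod (2 * N)), (hf2 _).trans ?_⟩
      change c ^ k = x * w at hk
      have : w = x⁻¹ * c ^ k := by rw [hk]; group
      rw [this, eq_inv_mul_iff_mul_eq, ← mul_assoc, hx2, ← zpow_add]
      congr 1; ring

lemma nr_act_mod_p {P : Type*} [Group P] {p : ℕ} (hp : p.Prime) (hP : IsPGroup p P) {c w : P}
    {n : ℕ} (hc : orderOf c = p ^ n) (hn : n ≠ 0) {r : ℤ} (hw : w * c * w⁻¹ = c ^ r) :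
    (p : ℤ) ∣ r - 1 := by
  have : Fact p.Prime := ⟨hp⟩
  obtain ⟨k, hk⟩ := hP w
  have h := nr_conj_pow hw (p ^ k)
  rw [hk] at h
  have h1 : 1 * c * 1⁻¹ = c ^ (1 : ℤ) := by group
  rw [h1, eq_comm, nr_zpow_eq hc] at h
  have h2 : (p : ℤ) ∣ r ^ p ^ k - 1 :=
    (Int.natCast_dvd_natCast.mpr (dvd_pow_self p hn)).trans h
  rw [← ZMod.intCast_zmod_eq_zero_iff_dvd] at h2 ⊢
  push_cast at h2 ⊢
  rwa [ZMod.pow_card_pow] at h2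

theorem stmt_1 (p : ℕ) (hp : p.Prime) (P : Type*) [Group P] [Finite P] [Nontrivial P]
    (hP : IsPGroup p P)
    (hrank : ∀ N : Subgroup P, N.Normal → (∀ g ∈ N, g ^ p = 1) →
      (∀ a ∈ N, ∀ b ∈ N, a * b = b * a) → IsCyclic N) :
    IsCyclic P ∨
    (∃ n : ℕ, 3 ≤ n ∧ Nonempty (P ≃* DihedralGroup (2 ^ n))) ∨
    (∃ n : ℕ, 2 ≤ n ∧ Nonempty (P ≃* QuaternionGroup (2 ^ (n - 1)))) ∨
    (∃ n : ℕ, 3 ≤ n ∧ IsSemidihedral P n) := by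
  have hfact : Fact p.Prime := ⟨hp⟩
  have hr : NRank p P := hrank
  obtain ⟨c, hn, hcen⟩ := nr_exists_c hp hP hr
  obtain ⟨n, hc⟩ := (IsPGroup.iff_orderOf.mp hP) c
  by_cases hall : ∀ w : P, w ∈ Subgroup.zpowers c
  · exact Or.inl ⟨c, hall⟩
  right
  push Not at hall
  obtain ⟨x, hxA⟩ := hall
  obtain ⟨r, hxr⟩ := hn x
  have hnr : ∀ {w : P} {s : ℤ}, w * c * w⁻¹ = c ^ s → w ∉ Subgroup.zpowers c →
      ¬ ((p ^ n : ℕ) : ℤ) ∣ s - 1 := fun hs hw h => hw (hcen _ (by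
    rw [hs]; conv_rhs => rw [← zpow_one c]
    rw [nr_zpow_eq hc]; exact h))
  have hn0 : n ≠ 0 := by
    rintro rfl
    exact hnr hxr hxA (by simp)
  have hp2 : p = 2 := by
    by_contra hp2
    exact hxA (nr_K hp hP hr hc hn hcen hxr (nr_act_mod_p hp hP hc hn0 hxr) (fun h => (hp2 h).elim))
  subst hp2
  have h4 : ∀ {w : P} {s : ℤ}, w * c * w⁻¹ = c ^ s → w ∉ Subgroup.zpowers c → s % 4 = 3 := by
    intro w s hs hw
    have h1 := nr_act_mod_p hp hP hc hn0 hs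
    have h2 : ¬ (4 : ℤ) ∣ s - 1 := fun h => hw (nr_K hp hP hr hc hn hcen hs h1 (fun _ => h))
    push_cast at h1
    omega
  have hr4 := h4 hxr hxA
  have hcov : ∀ w : P, w ∈ Subgroup.zpowers c ∨ x * w ∈ Subgroup.zpowers c := by
    intro w
    by_contra! hcon
    obtain ⟨s, hs⟩ := hn w
    have h1 := h4 hs hcon.1
    have h2 : (x * w) * c * (x * w)⁻¹ = c ^ (r * s) := by
      rw [← nr_conj hxr, ← hs]; group
    have h3 := h4 h2 hcon.2
    rw [Int.mul_emod, hr4, h1] at h3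
    norm_num at h3
  obtain ⟨m, rfl⟩ : ∃ m, n = m + 1 := ⟨n - 1, by omega⟩
  have hm0 : m ≠ 0 := by
    rintro rfl
    apply hnr hxr hxA
    push_cast
    omega
  have hcop : IsCoprime ((2 : ℤ) ^ m) ((r - 1) / 2) := by
    have := nr_coprime Nat.prime_two (u := (r - 1) / 2) (by push_cast; omega) m
    exact_mod_cast this
  have hr2 : r - 1 = 2 * ((r - 1) / 2) := by omega
  obtain ⟨k, hk⟩ := (hcov x).resolve_left hxA
  change c ^ k = x * x at hk
  have hc' : orderOf c = 2 * 2 ^ m := by rw [hc, pow_succ']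
  have hcast : ((2 * 2 ^ m : ℕ) : ℤ) = 2 * 2 ^ m := by push_cast; rfl
  have he : (2 : ℤ) ^ m ∣ r + 1 := by
    have h3 := nr_conj_pow hxr 2
    rw [pow_two, ← hk] at h3
    have h5 : c ^ k * c * (c ^ k)⁻¹ = c ^ (1 : ℤ) := by group
    rw [h5, eq_comm, nr_zpow_eq hc', hcast] at h3
    have h6 : r ^ 2 - 1 = 2 * ((r - 1) / 2 * (r + 1)) := by
      linear_combination (r + 1) * hr2
    rw [h6] at h3
    exact hcop.dvd_of_dvd_mul_left (Int.dvd_of_mul_dvd_mul_left two_ne_zero h3)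
  have hf : (2 : ℤ) ^ m ∣ k := by
    have h3 := nr_conj hxr k
    have h5 : x * c ^ k * x⁻¹ = c ^ k := by rw [hk]; group
    rw [h5, eq_comm, nr_zpow_eq hc', hcast] at h3
    have h6 : r * k - k = 2 * ((r - 1) / 2 * k) := by
      linear_combination k * hr2
    rw [h6] at h3
    exact hcop.dvd_of_dvd_mul_left (Int.dvd_of_mul_dvd_mul_left two_ne_zero h3)
  obtain ⟨e, he⟩ := he
  obtain ⟨f, rfl⟩ := hf
  have hmul : ∀ b : ℤ, c ^ ((2 : ℤ) ^ m * (2 * b)) = 1 := fun b => by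
    rw [nr_zpow_eq_one hc', hcast]; exact ⟨b, by ring⟩
  rcases Int.even_or_odd' e with ⟨e', rfl | rfl⟩
  · have hinv : x * c * x⁻¹ = c⁻¹ := by
      rw [hxr, ← mul_eq_one_iff_eq_inv, ← zpow_add_one, he, hmul]
    rcases Int.even_or_odd' f with ⟨f', rfl | rfl⟩
    · have hx2 : x * x = 1 := by rw [← hk, hmul]
      have hm1 : m ≠ 1 := by
        rintro rfl
        have hc4 : ∀ a : ℤ, c ^ a = 1 ↔ (4 : ℤ) ∣ a := fun a => by
          rw [nr_zpow_eq_one hc]; norm_num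
        have hxi : x⁻¹ = x := inv_eq_of_mul_eq_one_left hx2
        have hrel := nr_rel hinv
        refine nr_L1 hp hr (z := c ^ (2 : ℤ)) (x := x) ?_ ?_ ?_ (by rw [pow_two, hx2]) ?_ ?_ ?_
        · rw [← zpow_natCast, ← zpow_mul, hc4]; norm_num
        · rw [Ne, hc4]; norm_num
        · intro w
          obtain ⟨s, hs⟩ := hn w
          rw [nr_conj hs, mul_comm, zpow_mul]
          exact Subgroup.zpow_mem_zpowers _ _
        · intro h
          have hle : Subgroup.zpowers (c ^ (2 : ℤ)) ≤ Subgroup.zpowers c := by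
            simp only [Subgroup.zpowers_le]
            exact Subgroup.zpow_mem_zpowers _ _
          exact hxA (hle h)
        · rw [hrel, ← mul_inv_eq_one, ]
          have : x * c ^ (2 : ℤ) * (x * c ^ (-2 : ℤ))⁻¹ = x * c ^ (4 : ℤ) * x⁻¹ := by group
          rw [this, (hc4 4).mpr (by norm_num)]; group
        · intro w
          have key : ∀ a : ℤ, c ^ a * x * (c ^ a)⁻¹ * x⁻¹ = (c ^ (2 : ℤ)) ^ a := by
            intro a
            have h7 := nr_conj (c := c) (y := x) (r := -1) (by simpa using hinv) (-a)
            have : c ^ a * x * (c ^ a)⁻¹ * x⁻¹ = c ^ a * (x * c ^ (-a) * x⁻¹) := by group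
            rw [this, h7, ← zpow_add, ← zpow_mul]; congr 1; ring
          rcases hcov w with ⟨a, ha⟩ | ⟨a, ha⟩
          · rw [← ha]
            exact ⟨a, (key a).symm⟩
          · change c ^ a = x * w at ha
            have hw : w = c ^ (-a) * x := by
              rw [hrel, neg_neg, ha, ← mul_assoc, hx2, one_mul]
            have : w * x * w⁻¹ * x⁻¹ = c ^ (-a) * x * (c ^ (-a))⁻¹ * x⁻¹ := by
              rw [hw]; group
            rw [this]
            exact ⟨-a, (key (-a)).symm⟩
      exact Or.inl ⟨m + 1, by omega, nr_dihedral hc hinv hx2 hxA hcov⟩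
    · refine Or.inr (Or.inl ⟨m + 1, by omega, nr_quaternion hc' hinv ?_ hxA hcov⟩)
      rw [← hk, mul_add, zpow_add, hmul]
      push_cast
      rw [one_mul, mul_one]
  · refine Or.inr (Or.inr ⟨m + 1, ?_, ?_⟩)
    · by_contra hlt
      obtain rfl : m = 1 := by omega
      omega
    have hx' : ∃ x' : P, x' ∉ Subgroup.zpowers c ∧ x' * c * x'⁻¹ = c ^ r ∧ x' * x' = 1 ∧
        (∀ w, w ∈ Subgroup.zpowers c ∨ x' * w ∈ Subgroup.zpowers c) := by
      rcases Int.even_or_odd' f with ⟨f', rfl | rfl⟩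
      · exact ⟨x, hxA, hxr, by rw [← hk, hmul], hcov⟩
      · refine ⟨c * x, fun h => hxA ?_, ?_, ?_, fun w => ?_⟩
        · exact (Subgroup.mul_mem_cancel_left _ (Subgroup.mem_zpowers c)).mp h
        · have : c * x * c * (c * x)⁻¹ = c * (x * c * x⁻¹) * c⁻¹ := by group
          rw [this, hxr]; group
        · have : c * x * (c * x) = c * (x * c * x⁻¹) * (x * x) := by group
          rw [this, hxr, ← hk, ← zpow_one_add, ← zpow_add]
          rw [add_comm 1 r, he, ← hmul (e' + f' + 1)]
          congr 1; ring
        · rw [mul_assoc, Subgroup.mul_mem_cancel_left _ (Subgroup.mem_zpowers c)]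
          exact hcov w
    obtain ⟨x', hA', hr', h2', hcov'⟩ := hx'
    have hxi : x'⁻¹ = x' := inv_eq_of_mul_eq_one_left h2'
    refine ⟨c, x', hc, orderOf_eq_prime (by rw [pow_two, h2']) ?_, ?_, ?_, ?_⟩
    · rintro rfl; exact hA' (one_mem _)
    · rw [hxi] at hr'
      rw [hr', ← zpow_natCast, nr_zpow_eq hc', hcast, Nat.add_sub_cancel,
        Nat.cast_sub Nat.one_le_two_pow]
      push_cast
      exact ⟨e', by linear_combination he⟩
    · rw [eq_top_iff]
      intro w _
      have hcB : c ∈ Subgroup.closure ({c, x'} : Set P) := Subgroup.subset_closure (by simp)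
      have hxB : x' ∈ Subgroup.closure ({c, x'} : Set P) := Subgroup.subset_closure (by simp)
      have hle : Subgroup.zpowers c ≤ Subgroup.closure ({c, x'} : Set P) := by simpa using hcB
      rcases hcov' w with h | h
      · exact hle h
      · exact (Subgroup.mul_mem_cancel_left _ hxB).mp (hle h)
    · have hidx : (Subgroup.zpowers c).index = 2 := by
        rw [Subgroup.index_eq_two_iff']
        refine ⟨x', fun b => ?_⟩
        rcases hcov' b with h | h
        · refine Or.inr ⟨h, fun h' => hA' ?_⟩
          exact (Subgroup.mul_mem_cancel_right _ h).mp h'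
        · refine Or.inl ⟨h, fun h' => hA' ?_⟩
          exact (Subgroup.mul_mem_cancel_right _ h').mp h
      rw [← Subgroup.card_mul_index (Subgroup.zpowers c), hidx, Nat.card_zpowers, hc]
      ring
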